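/- Let CFG(G,O) be a chip firing game reaching a unique fixed point with configuration space the finite ULD lattice L, and let κ : M → V(G) × ℕ be the injective map sending each meet-irreducible m to (v, δ_{c'}(v)), where c ⋖ c' is any cover with 𝔪(c,c') = m and v is the vertex fired to pass from c to c'; write κ(m) = (κ(m)⁽¹⁾, κ(m)⁽²⁾). Then for every meet-irreducible m and every a ∈ 𝔏_m, the number of elements (v,n) of κ(M \ M_a) with v = κ(m)⁽¹⁾ is at most κ(m)⁽²⁾ − 1. -/

import Mathlib

open Classical

section CFGdefs

variable {V : Type*}

/-- Out-degree of a vertex in a directed multigraph with edge multiplicities `E`. -/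
noncomputable def outDeg (E : V → V → ℕ) (v : V) : ℕ := ∑ᶠ u, E v u

/-- A vertex is a sink if all its outgoing edges are loops. -/
def IsSink (E : V → V → ℕ) (v : V) : Prop := outDeg E v = E v v

/-- A vertex is firable in configuration `c`. -/
def Firable (E : V → V → ℕ) (c : V → ℕ) (v : V) : Prop :=
  ¬ IsSink E v ∧ outDeg E v ≤ c v

/-- The result of firing vertex `v` in configuration `c`. -/
noncomputable def fire (E : V → V → ℕ) (c : V → ℕ) (v : V) : V → ℕ :=
  fun u => if u = v then c v - outDeg E v + E v v else c u + E v u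

/-- The configuration obtained by firing a list of vertices in order. -/
noncomputable def fireList (E : V → V → ℕ) : (V → ℕ) → List V → (V → ℕ)
  | c, [] => c
  | c, v :: l => fireList E (fire E c v) l

/-- A list of vertices is a valid firing sequence from `c`. -/
def ValidSeq (E : V → V → ℕ) : (V → ℕ) → List V → Prop
  | _, [] => True
  | c, v :: l => Firable E c v ∧ ValidSeq E (fire E c v) l

/-- `c'` is reachable from `c` by a finite sequence of firings. -/
def Reaches (E : V → V → ℕ) (c c' : V → ℕ) : Prop :=
  ∃ l : List V, ValidSeq E c l ∧ fireList E c l = c'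

/-- A configuration with no firable vertex. -/
def FixedPt (E : V → V → ℕ) (c : V → ℕ) : Prop := ∀ v, ¬ Firable E c v

/-- The chip firing game `CFG(G,O)` reaches a unique fixed point. -/
def ReachesUFP (E : V → V → ℕ) (O : V → ℕ) : Prop :=
  ∃ fp : V → ℕ, Reaches E O fp ∧ FixedPt E fp ∧ ∀ c, Reaches E O c → Reaches E c fp

/-- The game is simple: in every firing sequence from `O` to the fixed point,
each vertex fires at most once. -/
def SimpleCFG (E : V → V → ℕ) (O : V → ℕ) : Prop :=
  ∀ l : List V, ValidSeq E O l → FixedPt E (fireList E O l) → l.Nodup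

/-- Single firing step from `c` to `c'` by firing vertex `v`. -/
def FireStep (E : V → V → ℕ) (c : V → ℕ) (v : V) (c' : V → ℕ) : Prop :=
  Firable E c v ∧ fire E c v = c'

/-- The partial order `L` is order-isomorphic to the configuration space of
`CFG(G,O)` ordered by reachability. -/
def Generates (E : V → V → ℕ) (O : V → ℕ) (L : Type*) [PartialOrder L] : Prop :=
  ∃ f : L ≃ {c : V → ℕ // Reaches E O c},
    ∀ a b : L, a ≤ b ↔ Reaches E (f a).val (f b).val

/-- The support graph is connected (as an undirected graph). -/
def ConnectedG (E : V → V → ℕ) : Prop :=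
  ∀ u v : V, Relation.ReflTransGen (fun a b => 0 < E a b ∨ 0 < E b a) u v

/-- The support graph together with its initial data is an Abelian Sandpile Model. -/
def IsASM (E : V → V → ℕ) : Prop :=
  ConnectedG E ∧ ∃ s : V, IsSink E s ∧ (∀ v, IsSink E v → v = s) ∧
    ∀ v₁ v₂ : V, v₁ ≠ v₂ → v₁ ≠ s → v₂ ≠ s → E v₁ v₂ = E v₂ v₁

/-- The directed multigraph has no directed cycle. -/
def AcyclicG (E : V → V → ℕ) : Prop :=
  ∀ v : V, ¬ Relation.TransGen (fun a b => 0 < E a b) v v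

end CFGdefs

/-- `L` is generated by some chip firing game reaching a unique fixed point. -/
def MemLCFG (L : Type*) [PartialOrder L] : Prop :=
  ∃ (V : Type) (_ : Finite V) (E : V → V → ℕ) (O : V → ℕ),
    ReachesUFP E O ∧ Generates E O L

/-- `L` is generated by some Abelian Sandpile Model reaching a unique fixed point. -/
def MemLASM (L : Type*) [PartialOrder L] : Prop :=
  ∃ (V : Type) (_ : Finite V) (E : V → V → ℕ) (O : V → ℕ),
    IsASM E ∧ ReachesUFP E O ∧ Generates E O L

section Latticedefs

variable {L : Type*} [Lattice L]

/-- `m` is meet-irreducible: it has exactly one upper cover. -/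
def MeetIrred (m : L) : Prop := ∃! y, m ⋖ y

/-- `j` is join-irreducible: it has exactly one lower cover. -/
def JoinIrred (j : L) : Prop := ∃! y, y ⋖ j

/-- The set `M_x \ M_y` of meet-irreducibles above `x` but not above `y`. -/
def MsetDiff (x y : L) : Set L := {m | MeetIrred m ∧ x ≤ m ∧ ¬ y ≤ m}

/-- The set `M \ M_a` of meet-irreducibles not above `a`. -/
def MnotAbove (a : L) : Set L := {m | MeetIrred m ∧ ¬ a ≤ m}

/-- `x⁺`: the join of all upper covers of `x`. -/
noncomputable def uplus [Fintype L] [OrderBot L] (x : L) : L :=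
  Finset.univ.sup (fun y => if x ⋖ y then y else ⊥)

/-- `L` is upper locally distributive: for every `x ≠ ⊤` the interval `[x, x⁺]`
is isomorphic to a Boolean lattice (a hypercube). -/
def IsULD (L : Type*) [Lattice L] [Fintype L] [BoundedOrder L] : Prop :=
  ∀ x : L, x ≠ ⊤ → ∃ n : ℕ, Nonempty (↥(Set.Icc x (uplus x)) ≃o Set (Fin n))

/-- `𝔘_m`: the minimal elements of `{x : ∃ y, x ⋖ y and 𝔪(x,y) = m}`. -/
def Uset (m : L) : Set L :=
  {x | Minimal (fun z => ∃ y, z ⋖ y ∧ MsetDiff z y = {m}) x}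

/-- `𝔏_m`: the maximal elements of `{x : a ≰ x for every a ∈ 𝔘_m}`. -/
def Lset (m : L) : Set L :=
  {x | Maximal (fun z => ∀ a ∈ Uset m, ¬ a ≤ z) x}

/-- `(w, e)` is a (non-negative integer) solution of the system `E(m)`. -/
def SolvesE [OrderBot L] (m : L) (w : ℕ) (e : L → ℕ) : Prop :=
  (Uset m = {(⊥ : L)} → 1 ≤ w) ∧
  (Uset m ≠ {(⊥ : L)} →
    (∀ a ∈ Lset m, (∑ᶠ x ∈ MnotAbove a, e x) < w) ∧
    (∀ a ∈ Uset m, w ≤ ∑ᶠ x ∈ MnotAbove a, e x))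

/-- The system `E(m)` has a non-negative integer solution. -/
def HasSolE [OrderBot L] (m : L) : Prop := ∃ w e, SolvesE m w e

/-- The variable `e_{x,m}` occurs in the system `𝔈(m)`. -/
def VarOccurs [OrderBot L] (x m : L) : Prop :=
  MeetIrred m ∧ Uset m ≠ {(⊥ : L)} ∧ ∃ a ∈ Uset m ∪ Lset m, x ∈ MnotAbove a

/-- `(W, Ee)` is a non-negative integer solution of the system `Ω`. -/
def SolvesOmega [OrderBot L] (W : L → ℕ) (Ee : L → L → ℕ) : Prop :=
  (∀ m : L, MeetIrred m → SolvesE m (W m) (fun x => Ee x m)) ∧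
  (∀ m₁ m₂ : L, m₁ ≠ m₂ → VarOccurs m₁ m₂ → VarOccurs m₂ m₁ → Ee m₁ m₂ = Ee m₂ m₁)

/-- The edge relation of the directed graph `𝒢` on the meet-irreducibles. -/
def Gedge (m₁ m₂ : L) : Prop :=
  MeetIrred m₁ ∧ MeetIrred m₂ ∧ ∃ a ∈ Uset m₂, m₁ ∈ MnotAbove a

end Latticedefs

/-- The system `Ω` has a non-negative integer solution. -/
def HasSolOmega (L : Type*) [Lattice L] [OrderBot L] : Prop :=
  ∃ W Ee, SolvesOmega (L := L) W Ee

/-- The directed graph `𝒢` on the meet-irreducibles is acyclic. -/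
def GAcyclic (L : Type*) [Lattice L] : Prop :=
  ∀ m : L, ¬ Relation.TransGen (Gedge (L := L)) m m

/-! ### Firing sequences -/

section FiringSequences

variable {V : Type*} {E : V → V → ℕ}

theorem validSeq_append {c : V → ℕ} {l l' : List V} :
    ValidSeq E c (l ++ l') ↔ ValidSeq E c l ∧ ValidSeq E (fireList E c l) l' := by
  induction l generalizing c with
  | nil => simp [ValidSeq, fireList]
  | cons v l ih => simp [ValidSeq, fireList, ih, and_assoc]

theorem fireList_append (c : V → ℕ) (l l' : List V) :
    fireList E c (l ++ l') = fireList E (fireList E c l) l' := by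
  induction l generalizing c with
  | nil => rfl
  | cons v l ih => exact ih _

/-- Conservation law: a valid firing sequence changes the number of chips at a vertex only
through the number of firings of each vertex. -/
theorem fireList_add_count_mul [Fintype V] {c : V → ℕ} {l : List V} (hl : ValidSeq E c l)
    (u : V) :
    fireList E c l u + l.count u * outDeg E u = c u + ∑ v, l.count v * E v u := by
  induction l generalizing c with
  | nil => simp [fireList]
  | cons w l ih =>
    have h := ih hl.2
    have hw : outDeg E w ≤ c w := hl.1.2
    have hsum : ∑ v, (w :: l).count v * E v u = ∑ v, l.count v * E v u + E w u := by
      simp [List.count_cons, add_mul, Finset.sum_add_distrib]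
    rw [hsum, List.count_cons]
    change fireList E (fire E c w) l u + _ = _
    by_cases huw : u = w
    · subst huw
      simp only [fire, if_true] at h
      simp only [beq_self_eq_true, if_true, add_mul, one_mul]
      omega
    · simp only [fire, if_neg huw] at h
      simp only [beq_iff_eq, if_neg (Ne.symm huw), add_zero]
      omega

theorem fireList_eq_of_count_eq [Finite V] {c : V → ℕ} {l l' : List V} (hl : ValidSeq E c l)
    (hl' : ValidSeq E c l') (h : ∀ v, l.count v = l'.count v) :
    fireList E c l = fireList E c l' := by
  have := Fintype.ofFinite V
  funext u
  have h₁ := fireList_add_count_mul hl u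
  have h₂ := fireList_add_count_mul hl' u
  simp only [h] at h₁
  omega

theorem fireList_apply_le_of_count_le [Finite V] {c : V → ℕ} {l l' : List V}
    (hl : ValidSeq E c l) (hl' : ValidSeq E c l') (h : ∀ v, l.count v ≤ l'.count v) {u : V}
    (hu : l.count u = l'.count u) : fireList E c l u ≤ fireList E c l' u := by
  have := Fintype.ofFinite V
  have h₁ := fireList_add_count_mul hl u
  have h₂ := fireList_add_count_mul hl' u
  have h₃ : ∑ v, l.count v * E v u ≤ ∑ v, l'.count v * E v u :=
    Finset.sum_le_sum fun v _ => Nat.mul_le_mul_right _ (h v)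
  rw [hu] at h₁
  omega

/-- Exchange property: a valid firing sequence extends so that its shot-vector becomes the
pointwise maximum with that of another one. -/
theorem exists_validSeq_append_count_eq_max [Finite V] {c : V → ℕ} {l₁ l₂ : List V}
    (h₁ : ValidSeq E c l₁) (h₂ : ValidSeq E c l₂) :
    ∃ l, ValidSeq E c (l₁ ++ l) ∧
      ∀ v, (l₁ ++ l).count v = max (l₁.count v) (l₂.count v) := by
  induction l₂ using List.reverseRecOn with
  | nil => exact ⟨[], by simpa using h₁, by simp⟩
  | append_singleton l₂ w ih =>
    obtain ⟨h₂, hw, -⟩ := validSeq_append.1 h₂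
    obtain ⟨l, hl, hcount⟩ := ih h₂
    by_cases hle : l₂.count w < l₁.count w
    · refine ⟨l, hl, fun v => ?_⟩
      rw [hcount, List.count_append, List.count_singleton]
      by_cases hv : w = v
      · subst hv
        simp only [beq_self_eq_true, if_true]
        omega
      · simp [hv]
    · refine ⟨l ++ [w], ?_, fun v => ?_⟩
      · rw [← List.append_assoc, validSeq_append]
        refine ⟨hl, ⟨hw.1, hw.2.trans ?_⟩, trivial⟩
        refine fireList_apply_le_of_count_le h₂ hl (fun v => ?_) ?_
        · rw [hcount]
          exact le_max_right _ _
        · rw [hcount]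
          omega
      · rw [← List.append_assoc, List.count_append, hcount, List.count_append,
          List.count_singleton]
        by_cases hv : w = v
        · subst hv
          simp only [beq_self_eq_true, if_true]
          omega
        · simp [hv]

theorem count_le_of_fixedPt [Finite V] {c : V → ℕ} {l l' : List V} (hl : ValidSeq E c l)
    (hfix : FixedPt E (fireList E c l)) (hl' : ValidSeq E c l') (v : V) :
    l'.count v ≤ l.count v := by
  obtain ⟨t, ht, hcount⟩ := exists_validSeq_append_count_eq_max hl hl'
  cases t with
  | nil =>
    have := hcount v
    rw [List.append_nil] at this
    omega
  | cons w t => exact absurd (validSeq_append.1 ht).2.1 (hfix w)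

/-- The shot-vector of a configuration does not depend on the firing sequence. -/
theorem count_eq_of_fireList_eq [Finite V] {O : V → ℕ} (hUFP : ReachesUFP E O) {l l' : List V}
    (hl : ValidSeq E O l) (hl' : ValidSeq E O l') (h : fireList E O l = fireList E O l')
    (v : V) : l.count v = l'.count v := by
  obtain ⟨fp, -, hfix, hreach⟩ := hUFP
  obtain ⟨p, hp, rfl⟩ := hreach _ ⟨l, hl, rfl⟩
  have hlp : ValidSeq E O (l ++ p) := validSeq_append.2 ⟨hl, hp⟩
  have hlp' : ValidSeq E O (l' ++ p) := validSeq_append.2 ⟨hl', h ▸ hp⟩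
  have h₁ := count_le_of_fixedPt hlp (by rwa [fireList_append]) hlp' v
  have h₂ := count_le_of_fixedPt hlp' (by rwa [fireList_append, ← h]) hlp v
  simp only [List.count_append] at h₁ h₂
  omega

theorem List.exists_eq_append_cons_count_eq {l : List V} {v : V} {k : ℕ} (h : k < l.count v) :
    ∃ p s, l = p ++ v :: s ∧ p.count v = k := by
  induction l generalizing k with
  | nil => simp at h
  | cons w l ih =>
    by_cases hw : w = v
    · subst hw
      cases k with
      | zero => exact ⟨[], l, rfl, rfl⟩
      | succ k =>
        obtain ⟨p, s, rfl, hp⟩ := ih (k := k) (by simpa using h)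
        exact ⟨w :: p, s, rfl, by simp [hp]⟩
    · obtain ⟨p, s, rfl, hp⟩ := ih (k := k) (by simpa [List.count_cons, hw] using h)
      exact ⟨w :: p, s, rfl, by simp [hw, hp]⟩

end FiringSequences

/-! ### Shot-vectors on the configuration lattice -/

/-- `δ` assigns to each element of the configuration lattice its shot-vector. -/
def IsShotVector {V L : Type*} (E : V → V → ℕ) (O : V → ℕ)
    (f : L ≃ {c : V → ℕ // Reaches E O c}) (δ : L → V → ℕ) : Prop :=
  ∀ x l, ValidSeq E O l → fireList E O l = (f x).val → ∀ v, l.count v = δ x v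

theorem exists_isShotVector {V L : Type*} [Finite V] {E : V → V → ℕ} {O : V → ℕ}
    (hUFP : ReachesUFP E O) (f : L ≃ {c : V → ℕ // Reaches E O c}) :
    ∃ δ, IsShotVector E O f δ := by
  choose s hs hsf using fun x => (f x).prop
  exact ⟨fun x v => (s x).count v, fun x l hl hlf =>
    count_eq_of_fireList_eq hUFP hl (hs x) (hlf.trans (hsf x).symm)⟩

section ShotVector

variable {V L : Type*} {E : V → V → ℕ} {O : V → ℕ}
  {f : L ≃ {c : V → ℕ // Reaches E O c}} {δ : L → V → ℕ}

theorem IsShotVector.fireStep (hδ : IsShotVector E O f δ) {x y : L} {w : V}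
    (h : FireStep E (f x).val w (f y).val) (v : V) :
    δ y v = δ x v + if w = v then 1 else 0 := by
  obtain ⟨l, hl, hlx⟩ := (f x).prop
  rw [← hδ x l hl hlx, ← hδ y (l ++ [w]) (validSeq_append.2 ⟨hl, by rw [hlx]; exact ⟨h.1, trivial⟩⟩)
    (by rw [fireList_append, hlx]; exact h.2), List.count_append, List.count_singleton]
  simp

/-- If reaching `a` takes more than `k` firings of `v`, some firing of `v` below `a` is preceded by
exactly `k` others. -/
theorem IsShotVector.exists_fireStep (hδ : IsShotVector E O f δ) {a : L} {v : V} {k : ℕ}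
    (hk : k < δ a v) :
    ∃ c c', FireStep E (f c).val v (f c').val ∧ δ c v = k ∧
      Reaches E (f c').val (f a).val := by
  obtain ⟨l, hl, hla⟩ := (f a).prop
  rw [← hδ a l hl hla] at hk
  obtain ⟨p, s, rfl, hp⟩ := List.exists_eq_append_cons_count_eq hk
  obtain ⟨hpv, hfire, hs⟩ := validSeq_append.1 hl
  have hpv' : ValidSeq E O (p ++ [v]) := validSeq_append.2 ⟨hpv, hfire, trivial⟩
  have hfl : fireList E O (p ++ [v]) = fire E (fireList E O p) v := fireList_append O p [v]
  refine ⟨f.symm ⟨_, p, hpv, rfl⟩, f.symm ⟨_, p ++ [v], hpv', rfl⟩, ?_, ?_, s, ?_, ?_⟩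
  · simp only [Equiv.apply_symm_apply]
    exact ⟨hfire, hfl.symm⟩
  · rw [← hδ _ p hpv (by simp), hp]
  · simpa [hfl] using hs
  · rw [fireList_append] at hla
    simpa [hfl, fireList] using hla

variable [Finite V] [Lattice L]

theorem IsShotVector.le_iff (hδ : IsShotVector E O f δ)
    (hf : ∀ a b : L, a ≤ b ↔ Reaches E (f a).val (f b).val) {x y : L} :
    x ≤ y ↔ ∀ v, δ x v ≤ δ y v := by
  obtain ⟨l, hl, hlx⟩ := (f x).prop
  obtain ⟨l', hl', hly⟩ := (f y).prop
  constructor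
  · intro hxy v
    obtain ⟨t, ht, hty⟩ := (hf x y).1 hxy
    rw [← hδ x l hl hlx, ← hδ y (l ++ t) (validSeq_append.2 ⟨hl, by rwa [hlx]⟩)
      (by rw [fireList_append, hlx, hty]), List.count_append]
    exact Nat.le_add_right _ _
  · intro h
    obtain ⟨t, ht, hcount⟩ := exists_validSeq_append_count_eq_max hl hl'
    refine (hf x y).2 ⟨t, hlx ▸ (validSeq_append.1 ht).2, ?_⟩
    rw [← hlx, ← fireList_append, ← hly]
    refine fireList_eq_of_count_eq ht hl' fun v => ?_
    rw [hcount, hδ x l hl hlx, hδ y l' hl' hly, max_eq_right (h v)]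

theorem IsShotVector.sup_le (hδ : IsShotVector E O f δ)
    (hf : ∀ a b : L, a ≤ b ↔ Reaches E (f a).val (f b).val) (x y : L) (v : V) :
    δ (x ⊔ y) v ≤ max (δ x v) (δ y v) := by
  obtain ⟨l, hl, hlx⟩ := (f x).prop
  obtain ⟨l', hl', hly⟩ := (f y).prop
  obtain ⟨t, ht, hcount⟩ := exists_validSeq_append_count_eq_max hl hl'
  set z : L := f.symm ⟨_, l ++ t, ht, rfl⟩ with hz
  have hδz : ∀ u, δ z u = max (δ x u) (δ y u) := fun u => by
    rw [← hδ z _ ht (by simp [hz]), hcount, hδ x l hl hlx, hδ y l' hl' hly]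
  have hxyz : x ⊔ y ≤ z := _root_.sup_le
    ((hδ.le_iff hf).2 fun u => (hδz u).symm ▸ le_max_left _ _)
    ((hδ.le_iff hf).2 fun u => (hδz u).symm ▸ le_max_right _ _)
  exact ((hδ.le_iff hf).1 hxyz v).trans (hδz v).le

theorem IsShotVector.covBy_of_fireStep (hδ : IsShotVector E O f δ)
    (hf : ∀ a b : L, a ≤ b ↔ Reaches E (f a).val (f b).val) {x y : L} {w : V}
    (h : FireStep E (f x).val w (f y).val) : x ⋖ y := by
  have hxy := hδ.fireStep h
  refine ⟨lt_of_le_not_ge ((hδ.le_iff hf).2 fun v => by have := hxy v; omega) fun hle => ?_,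
    fun z hxz hzy => ?_⟩
  · have h₁ := (hδ.le_iff hf).1 hle w
    have h₂ := hxy w
    rw [if_pos rfl] at h₂
    omega
  · have hz₁ := (hδ.le_iff hf).1 hxz.le
    have hz₂ := (hδ.le_iff hf).1 hzy.le
    rcases (hz₁ w).lt_or_eq with hw | hw
    · refine hzy.not_ge ((hδ.le_iff hf).2 fun v => ?_)
      have h₁ := hz₁ v
      have h₂ := hxy v
      by_cases hv : w = v
      · subst hv
        rw [if_pos rfl] at h₂
        omega
      · rw [if_neg hv] at h₂
        omega
    · refine hxz.not_ge ((hδ.le_iff hf).2 fun v => ?_)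
      have h₂ := hxy v
      have h₃ := hz₂ v
      by_cases hv : w = v
      · subst hv
        omega
      · rw [if_neg hv] at h₂
        omega

/-- A meet-irreducible `m` has a vertex `w` whose firing leads to its upper cover, which lies
below everything strictly above `m`. -/
theorem IsShotVector.exists_fireStep_of_meetIrred (hδ : IsShotVector E O f δ)
    (hf : ∀ a b : L, a ≤ b ↔ Reaches E (f a).val (f b).val) {m : L} (hm : MeetIrred m) :
    ∃ m' w, FireStep E (f m).val w (f m').val ∧ ∀ x, m < x → m' ≤ x := by
  have key : ∀ x, m < x → ∃ z w, FireStep E (f m).val w (f z).val ∧ z ≤ x := by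
    intro x hx
    obtain ⟨t, ht, htx⟩ := (hf m x).1 hx.le
    cases t with
    | nil => exact absurd (f.injective (Subtype.ext htx)) hx.ne
    | cons w t =>
      obtain ⟨l, hl, hlm⟩ := (f m).prop
      have hz : Reaches E O (fire E (f m).val w) :=
        ⟨l ++ [w], validSeq_append.2 ⟨hl, by rw [hlm]; exact ⟨ht.1, trivial⟩⟩,
          by rw [fireList_append, hlm]; rfl⟩
      refine ⟨f.symm ⟨_, hz⟩, w, ⟨ht.1, by simp⟩, (hf _ _).2 ⟨t, ?_, ?_⟩⟩
      · simpa using ht.2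
      · simpa [fireList] using htx
  obtain ⟨y, hy, huniq⟩ := hm
  obtain ⟨z, w, hz, -⟩ := key y hy.lt
  have hzy := huniq z (hδ.covBy_of_fireStep hf hz)
  refine ⟨z, w, hz, fun x hx => ?_⟩
  obtain ⟨z', w', hz', hle⟩ := key x hx
  rwa [hzy, ← huniq z' (hδ.covBy_of_fireStep hf hz')]

end ShotVector

/-- for a CFG reaching a unique fixed point generating the finite ULD
lattice `L`, with `κ : M → V × ℕ` the map sending each meet-irreducible `m` to the pair
(fired vertex, shot-vector value) of any cover labeled `m`: for every meet-irreducible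
`m` and every `a ∈ 𝔏_m`, the number of elements `(v,n)` of `κ(M \ M_a)` with
`v = κ(m)⁽¹⁾` is at most `κ(m)⁽²⁾ - 1`. -/
theorem stmt18 {V : Type*} [Finite V] (E : V → V → ℕ) (O : V → ℕ)
    (hUFP : ReachesUFP E O)
    {L : Type*} [Lattice L] [Fintype L] [BoundedOrder L] (hULD : IsULD L)
    (f : L ≃ {c : V → ℕ // Reaches E O c})
    (hf : ∀ a b : L, a ≤ b ↔ Reaches E (f a).val (f b).val)
    (κ : {m : L // MeetIrred m} → V × ℕ)
    (hκ : ∀ (m : {m : L // MeetIrred m}) (c c' : L) (v : V) (l : List V),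
      c ⋖ c' → MsetDiff c c' = {m.val} → FireStep E (f c).val v (f c').val →
      ValidSeq E O l → fireList E O l = (f c').val →
      κ m = (v, l.count v)) :
    ∀ (m : {m : L // MeetIrred m}) (a : L), a ∈ Lset m.val →
      ((κ '' {x : {m : L // MeetIrred m} | ¬ a ≤ x.val}) ∩
        {p : V × ℕ | p.1 = (κ m).1}).ncard ≤ (κ m).2 - 1 := by
  obtain ⟨δ, hδ⟩ := exists_isShotVector hUFP f
  have hle := fun {x y : L} => hδ.le_iff hf (x := x) (y := y)
  -- The label of `x` is read off at `x` itself, and grows strictly above `x`.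
  have hκx : ∀ x : {m : L // MeetIrred m}, (κ x).2 = δ x.val (κ x).1 + 1 ∧
      ∀ y, x.val < y → (κ x).2 ≤ δ y (κ x).1 := by
    intro x
    obtain ⟨x', w, hstep, hup⟩ := hδ.exists_fireStep_of_meetIrred hf x.prop
    have hcov := hδ.covBy_of_fireStep hf hstep
    have hdiff : MsetDiff x.val x' = {x.val} := by
      ext y
      constructor
      · rintro ⟨-, hxy, hy⟩
        by_contra hne
        exact hy (hup y (lt_of_le_of_ne hxy (Ne.symm hne)))
      · rintro rfl
        exact ⟨x.prop, le_rfl, hcov.lt.not_ge⟩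
    obtain ⟨l, hl, hlx⟩ := (f x').prop
    have hκ' := hκ x x.val x' w l hcov hdiff hstep hl hlx
    rw [hδ x' l hl hlx] at hκ'
    rw [hκ']
    exact ⟨by simpa using hδ.fireStep hstep w, fun y hy => hle.1 (hup y hy) w⟩
  -- An element that fires the vertex of `κ x` fewer than `(κ x).2` times lies below `x`.
  have hbelow : ∀ (x : {m : L // MeetIrred m}) (y : L), δ y (κ x).1 < (κ x).2 → y ≤ x.val := by
    intro x y hy
    by_contra hyx
    have h₁ := (hκx x).2 (x.val ⊔ y) (left_lt_sup.2 hyx)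
    have h₂ := hδ.sup_le hf x.val y (κ x).1
    have h₃ := (hκx x).1
    omega
  have hinj : Function.Injective κ := by
    intro x y hxy
    refine Subtype.ext (le_antisymm (hbelow y x ?_) (hbelow x y ?_))
    · rw [← hxy, (hκx x).1]
      exact Nat.lt_succ_self _
    · rw [hxy, (hκx y).1]
      exact Nat.lt_succ_self _
  intro m a ha
  have hδa : δ a (κ m).1 < (κ m).2 := by
    by_contra! hcontra
    obtain ⟨c, c', hstep, hc, hreach⟩ :=
      hδ.exists_fireStep (a := a) (v := (κ m).1) (k := δ m.val (κ m).1)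
        (by have := (hκx m).1; omega)
    have hcov := hδ.covBy_of_fireStep hf hstep
    have hcc' := hδ.fireStep hstep
    have hdiff : MsetDiff c c' = {m.val} := by
      ext x
      constructor
      · rintro ⟨hx, hcx, hcx'⟩
        have h₁ : (κ ⟨x, hx⟩).2 ≤ δ c' (κ ⟨x, hx⟩).1 := by
          by_contra! hlt
          exact hcx' (hbelow ⟨x, hx⟩ c' hlt)
        have h₂ := (hκx ⟨x, hx⟩).1
        have h₃ := hle.1 hcx (κ ⟨x, hx⟩).1
        have h₄ := hcc' (κ ⟨x, hx⟩).1
        have hv : (κ m).1 = (κ ⟨x, hx⟩).1 := by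
          by_contra hne
          rw [if_neg hne] at h₄
          simp only at h₂
          omega
        rw [if_pos hv] at h₄
        simp only at h₂
        have h₅ := (hκx m).1
        rw [hv] at hc h₅
        exact congrArg Subtype.val (hinj (Prod.ext hv.symm (by omega) : κ ⟨x, hx⟩ = κ m))
      · rintro rfl
        refine ⟨m.prop, hbelow m c (by have := (hκx m).1; omega), fun h => ?_⟩
        have h₁ := hle.1 h (κ m).1
        have h₂ := hcc' (κ m).1
        rw [if_pos rfl] at h₂
        omega
    obtain ⟨u, huc, hu⟩ := exists_minimal_le_of_wellFoundedLT
      (fun z => ∃ y, z ⋖ y ∧ MsetDiff z y = {m.val}) c ⟨c', hcov, hdiff⟩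
    exact ha.1 u hu (huc.trans (hcov.le.trans ((hf _ _).2 hreach)))
  have hsub : (κ '' {x : {m : L // MeetIrred m} | ¬ a ≤ x.val}) ∩
      {p : V × ℕ | p.1 = (κ m).1} ⊆ (Prod.mk (κ m).1) '' (Set.Ioo 0 (κ m).2) := by
    rintro _ ⟨⟨x, hx, rfl⟩, hxv⟩
    refine ⟨(κ x).2, ⟨(hκx x).1 ▸ Nat.succ_pos _, ?_⟩, Prod.ext hxv.symm rfl⟩
    refine lt_of_le_of_lt ?_ hδa
    by_contra! hlt
    exact hx (hbelow x a (by rwa [show (κ x).1 = (κ m).1 from hxv]))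
  calc _ ≤ _ := Set.ncard_le_ncard hsub ((Set.finite_Ioo _ _).image _)
    _ ≤ (Set.Ioo 0 (κ m).2).ncard := Set.ncard_image_le (Set.finite_Ioo _ _)
    _ = (κ m).2 - 1 := by simp [Set.ncard_eq_toFinset_card']
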